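/- arXiv:1205.5945 — 2 statements merged into one kernel-verified Lean document; each statement's English description precedes it below -/
import Mathlib

section
/- Let R be a Noetherian unique factorization domain, let M and N be finitely generated torsion R-modules, and let α : M → N and β : N → M be R-linear maps that are pseudo-injections (their kernels are pseudo-null). Then the composition β ∘ α : M → M is a pseudo-isomorphism (its kernel and cokernel are pseudo-null). -/
/-- A module `M` over `R` is pseudo-null if its localization at every height-one
prime ideal of `R` vanishes. -/
def IsPseudoNull (R : Type*) [CommRing R] (M : Type*) [AddCommGroup M] [Module R M] : Prop :=
  ∀ P : PrimeSpectrum R, Order.height P = 1 →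
    Subsingleton (LocalizedModule P.asIdeal.primeCompl M)

/-- A linear map is a pseudo-isomorphism if its kernel and cokernel are pseudo-null. -/
def IsPseudoIsom (R : Type*) [CommRing R] {M N : Type*} [AddCommGroup M] [Module R M]
    [AddCommGroup N] [Module R N] (f : M →ₗ[R] N) : Prop :=
  IsPseudoNull R (LinearMap.ker f) ∧ IsPseudoNull R (N ⧸ LinearMap.range f)

/-!
Localizing at a height-one prime `P` turns `β ∘ α` into an injective endomorphism of the finite
torsion module `M_P` over the ring `R_P` of dimension at most one. A nonzerodivisor kills `M_P`, and
it lies in no minimal prime, so `M_P` is supported at maximal ideals only.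

An injective endomorphism `f` of a finite `A`-module `M` supported at maximal ideals is surjective
(Vasconcelos): the commutative ring `A[f] ⊆ End_A M` is integral over `A`, and each of its primes
contracts to a prime in the support of `M`, so it is zero-dimensional. Since `f` is injective, it is
a nonzerodivisor in `A[f]`, and nonzerodivisors of a zero-dimensional ring are units.
-/

section InjectiveEndomorphism

open scoped IsMulCommutative nonZeroDivisors

theorem isUnit_of_mem_nonZeroDivisors_of_krullDimLE_zero {B : Type*} [CommRing B]
    [Ring.KrullDimLE 0 B] {b : B} (hb : b ∈ B⁰) : IsUnit b := by
  by_contra hunit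
  obtain ⟨m, hm, hbm⟩ := exists_max_ideal_of_mem_nonunits hunit
  have := hm.isPrime
  exact notMem_nonZeroDivisors_of_mem_mem_minimalPrimes hbm
    m.mem_minimalPrimes_of_krullDimLE_zero hb

variable {A M : Type*} [CommRing A] [AddCommGroup M] [Module A M] [Module.Finite A M]

theorem krullDimLE_zero_of_forall_mem_support_isMaximal (B : Type*) [CommRing B] [Algebra A B]
    [Algebra.IsIntegral A B] [Module B M] [IsScalarTower A B M] [FaithfulSMul B M]
    (hM : ∀ p ∈ Module.support A M, p.asIdeal.IsMaximal) : Ring.KrullDimLE 0 B := by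
  refine .mk₀ fun Q hQ ↦ Ideal.isMaximal_of_isIntegral_of_isMaximal_comap (R := A) Q ?_
  refine hM (PrimeSpectrum.comap (algebraMap A B) ⟨Q, hQ⟩) ?_
  rw [Module.mem_support_iff_of_finite]
  intro a ha
  have hzero : algebraMap A B a = 0 := FaithfulSMul.eq_of_smul_eq_smul fun m : M ↦ by
    rw [algebraMap_smul, Module.mem_annihilator.mp ha m, zero_smul]
  simp [hzero]

theorem surjective_of_injective_of_forall_mem_support_isMaximal {f : Module.End A M}
    (hM : ∀ p ∈ Module.support A M, p.asIdeal.IsMaximal) (hf : Function.Injective f) :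
    Function.Surjective f := by
  let B := Algebra.adjoin A {f}
  have : Algebra.IsIntegral A B := .of_injective B.val Subtype.val_injective
  have : Ring.KrullDimLE 0 B := krullDimLE_zero_of_forall_mem_support_isMaximal (M := M) B hM
  let F : B := ⟨f, Algebra.self_mem_adjoin_singleton A f⟩
  have hF : F ∈ B⁰ := mem_nonZeroDivisors_iff_left.mpr fun g hFg ↦
    Subtype.ext <| LinearMap.ext fun m ↦ hf <| by
      simpa using LinearMap.congr_fun (congrArg Subtype.val hFg) m
  have hunit : IsUnit f := (isUnit_of_mem_nonZeroDivisors_of_krullDimLE_zero hF).map B.val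
  exact ((Module.End.isUnit_iff f).mp hunit).surjective

theorem isMaximal_of_mem_support_of_isTorsion [Ring.KrullDimLE 1 A] (hM : Module.IsTorsion A M)
    {p : PrimeSpectrum A} (hp : p ∈ Module.support A M) : p.asIdeal.IsMaximal := by
  obtain ⟨a, ha, ha0⟩ := Submodule.annihilator_top_inter_nonZeroDivisors hM
  have hap : a ∈ p.asIdeal :=
    Module.annihilator_le_of_mem_support hp (by rwa [← Submodule.annihilator_top])
  exact (Ring.krullDimLE_one_iff.mp ‹_› p.asIdeal p.isPrime).resolve_left fun hmin ↦
    notMem_nonZeroDivisors_of_mem_mem_minimalPrimes hap hmin ha0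

end InjectiveEndomorphism

section Localization

variable {R : Type*} [CommRing R]

theorem krullDimLE_localization_atPrime_of_height_le {P : PrimeSpectrum R} {n : ℕ}
    (hP : Order.height P ≤ n) : Ring.KrullDimLE n (Localization.AtPrime P.asIdeal) := by
  rw [Ring.krullDimLE_iff, IsLocalization.AtPrime.ringKrullDim_eq_height P.asIdeal,
    P.height_eq_orderHeight]
  exact_mod_cast hP

variable {M N : Type*} [AddCommGroup M] [Module R M] [AddCommGroup N] [Module R N]
  (S : Submonoid R)

theorem isTorsion_localizedModule (hM : Module.IsTorsion R M) :
    Module.IsTorsion (Localization S) (LocalizedModule S M) := by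
  intro x
  induction x using LocalizedModule.induction_on with
  | h m s =>
    obtain ⟨a, ha⟩ := @hM m
    refine ⟨⟨algebraMap R _ a, IsLocalization.map_nonZeroDivisors_le S _ ⟨a, a.2, rfl⟩⟩, ?_⟩
    rw [Submonoid.mk_smul, algebraMap_smul, LocalizedModule.smul'_mk, ← Submonoid.smul_def, ha,
      LocalizedModule.zero_mk]

theorem subsingleton_localizedModule_ker_iff_injective_map (f : M →ₗ[R] N) :
    Subsingleton (LocalizedModule S (LinearMap.ker f)) ↔
      Function.Injective (LocalizedModule.map S f) := by
  let ιM := LocalizedModule.mkLinearMap S M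
  let ιN := LocalizedModule.mkLinearMap S N
  have := LinearMap.toKerLocalized_isLocalizedModule (Localization S) S ιM ιN f
  rw [(IsLocalizedModule.iso S (LinearMap.toKerIsLocalized S ιM ιN f)).subsingleton_congr,
    Submodule.subsingleton_iff_eq_bot, LinearMap.ker_eq_bot]
  rfl

end Localization

section Pseudo

variable {R L M N : Type*} [CommRing R] [AddCommGroup L] [Module R L] [AddCommGroup M] [Module R M]
  [AddCommGroup N] [Module R N]

theorem isPseudoNull_ker_iff {f : M →ₗ[R] N} :
    IsPseudoNull R (LinearMap.ker f) ↔ ∀ P : PrimeSpectrum R, Order.height P = 1 →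
      Function.Injective (LocalizedModule.map P.asIdeal.primeCompl f) :=
  forall₂_congr fun _ _ ↦ subsingleton_localizedModule_ker_iff_injective_map _ f

theorem isPseudoNull_coker_iff {f : M →ₗ[R] N} :
    IsPseudoNull R (N ⧸ LinearMap.range f) ↔ ∀ P : PrimeSpectrum R, Order.height P = 1 →
      Function.Surjective (LocalizedModule.map P.asIdeal.primeCompl f) :=
  forall₂_congr fun _ _ ↦
    (LinearMap.localizedMap_surjective_iff_subsingleton_localized_coker _ f).symm

theorem isPseudoNull_ker_comp {g : M →ₗ[R] N} {f : L →ₗ[R] M}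
    (hg : IsPseudoNull R (LinearMap.ker g)) (hf : IsPseudoNull R (LinearMap.ker f)) :
    IsPseudoNull R (LinearMap.ker (g ∘ₗ f)) := by
  rw [isPseudoNull_ker_iff] at hg hf ⊢
  intro P hP
  have hcomp : ⇑(LocalizedModule.map P.asIdeal.primeCompl (g ∘ₗ f)) =
      LocalizedModule.map P.asIdeal.primeCompl g ∘ LocalizedModule.map P.asIdeal.primeCompl f :=
    congrArg DFunLike.coe (IsLocalizedModule.map_comp' P.asIdeal.primeCompl
      (LocalizedModule.mkLinearMap _ L) (LocalizedModule.mkLinearMap _ M)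
      (LocalizedModule.mkLinearMap _ N) f g)
  exact hcomp ▸ (hg P hP).comp (hf P hP)

theorem isPseudoIsom_of_isPseudoNull_ker_of_isTorsion [Module.Finite R M]
    (hM : Module.IsTorsion R M) {f : Module.End R M} (hf : IsPseudoNull R (LinearMap.ker f)) :
    IsPseudoIsom R f := by
  refine ⟨hf, isPseudoNull_coker_iff.mpr fun P hP ↦ ?_⟩
  have : Ring.KrullDimLE 1 (Localization.AtPrime P.asIdeal) :=
    krullDimLE_localization_atPrime_of_height_le (by simp [hP])
  exact surjective_of_injective_of_forall_mem_support_isMaximal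
    (fun _ ↦ isMaximal_of_mem_support_of_isTorsion (isTorsion_localizedModule _ hM))
    (isPseudoNull_ker_iff.mp hf P hP)

end Pseudo

theorem stmt_3_general (R : Type*) [CommRing R] (M N : Type*) [AddCommGroup M] [Module R M]
    [Module.Finite R M] [AddCommGroup N] [Module R N] (hM : Module.IsTorsion R M)
    (α : M →ₗ[R] N) (β : N →ₗ[R] M)
    (hα : IsPseudoNull R (LinearMap.ker α)) (hβ : IsPseudoNull R (LinearMap.ker β)) :
    IsPseudoIsom R (β ∘ₗ α) :=
  isPseudoIsom_of_isPseudoNull_ker_of_isTorsion hM (isPseudoNull_ker_comp hβ hα)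

/-- Over a Noetherian UFD, if `α : M → N` and `β : N → M` are pseudo-injections between
finitely generated torsion modules, then `β ∘ α` is a pseudo-isomorphism. -/
theorem stmt_3 (R : Type*) [CommRing R] [IsDomain R] [IsNoetherianRing R]
    [UniqueFactorizationMonoid R]
    (M N : Type*) [AddCommGroup M] [Module R M] [Module.Finite R M]
    [AddCommGroup N] [Module R N] [Module.Finite R N]
    (hM : Module.IsTorsion R M) (hN : Module.IsTorsion R N)
    (α : M →ₗ[R] N) (β : N →ₗ[R] M)
    (hα : IsPseudoNull R (LinearMap.ker α)) (hβ : IsPseudoNull R (LinearMap.ker β)) :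
    IsPseudoIsom R (β ∘ₗ α) :=
  stmt_3_general R M N hM α β hα hβ
end

section
/- Let p be a prime and q = p^a with a ≥ 1. Fix an algebraic closure 𝔽̄_p of the field with p elements, for each n ≥ 0 let k_n ⊆ 𝔽̄_p be the (unique) finite subfield with q^{p^n} elements, and let k_∞ := ∪_{n≥0} k_n. Let W(k_∞) denote the ring of p-typical Witt vectors of k_∞, let F be the a-th iterate of the Witt vector Frobenius of W(k_∞), and let V be a finite-dimensional ℚ_p-vector space with a ℚ_p-linear endomorphism φ : V → V. Then the ℚ_p-linear endomorphism 1 − φ⊗F of V ⊗_{ℤ_p} W(k_∞) (which is a ℚ_p-vector space, the tensor product being taken over ℤ_p) is surjective, and its kernel is a finite-dimensional ℚ_p-vector space. -/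
set_option synthInstance.maxHeartbeats 1000000
set_option maxHeartbeats 1000000

/-- The subfield of fixed points of a field endomorphism. -/
def fixedSubfield {K : Type*} [Field K] (f : K →+* K) : Subfield K where
  carrier := {x | f x = x}
  mul_mem' := by
    intro a b ha hb
    simp only [Set.mem_setOf_eq] at *
    rw [map_mul, ha, hb]
  one_mem' := by simp only [Set.mem_setOf_eq, map_one]
  add_mem' := by
    intro a b ha hb
    simp only [Set.mem_setOf_eq] at *
    rw [map_add, ha, hb]
  zero_mem' := by simp only [Set.mem_setOf_eq, map_zero]
  neg_mem' := by
    intro a ha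
    simp only [Set.mem_setOf_eq] at *
    rw [map_neg, ha]
  inv_mem' := by
    intro a ha
    simp only [Set.mem_setOf_eq] at *
    rw [map_inv₀, ha]

/-- The unique subfield of `𝔽̄_p` with `q^{p^n}` elements (`q = p^a`), realized as the fixed
points of the `(a·p^n)`-th iterate of the Frobenius `x ↦ x^p`. -/
noncomputable def kLevel (p : ℕ) [Fact p.Prime] (a n : ℕ) :
    Subfield (AlgebraicClosure (ZMod p)) :=
  fixedSubfield (iterateFrobenius (AlgebraicClosure (ZMod p)) p (a * p ^ n))

/-- `k_∞ = ∪_{n ≥ 0} k_n`, the constant `ℤ_p`-extension of `𝔽_q` inside `𝔽̄_p`. -/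
noncomputable def kInf (p : ℕ) [Fact p.Prime] (a : ℕ) :
    Subfield (AlgebraicClosure (ZMod p)) :=
  ⨆ n : ℕ, kLevel p a n

instance (K : Type*) [Field K] (p : ℕ) [CharP K p] (S : Subfield K) : CharP S p :=
  S.subtype.charP Subtype.val_injective p

/-- The canonical `ℤ_p`-algebra structure map `ℤ_p →+* W(k)` for a field `k` of
characteristic `p`, obtained from `W(𝔽_p) ≃ ℤ_p` and functoriality of Witt vectors. -/
noncomputable def wittScalar (p : ℕ) [Fact p.Prime] (K : Type*) [Field K] [CharP K p] :
    ℤ_[p] →+* WittVector p K :=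
  (WittVector.map (ZMod.castHom dvd_rfl K)).comp (WittVector.equiv (p := p)).symm.toRingHom

/-!
Let `Q` be the reversed characteristic polynomial of `φ`. Modulo `1 - φ ⊗ F` the operators `φ ⊗ 1`
and `1 ⊗ F` are inverse to each other, so Cayley–Hamilton shows that `1 - φ ⊗ F` divides
`Q(1 ⊗ F) = c • (1 ⊗ P(F))`, where `Q = c P` with `c ≠ 0` and `P` primitive over `ℤ_p`. It
therefore suffices that `P(F)` is surjective on `W(k_∞)` with finitely generated kernel. By `p`-adic
completeness this can be tested modulo `p`, where `P(F)` becomes a nonzero polynomial `P̄` in the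
`q`-power Frobenius `f` of `k_∞`. Its kernel is the zero set of a nonzero linearized polynomial,
hence finite. Since `(f - 1) ^ p ^ n = f ^ p ^ n - 1`, the field `k_∞` is the generalized
`1`-eigenspace of `f` on the algebraic closure, where `f - 1` is surjective (Artin–Schreier). So
on `k_∞` the operator `f - 1` is surjective and locally nilpotent, which makes every nonzero
polynomial in `f` surjective.
-/

open Polynomial TensorProduct
open scoped Pointwise

theorem one_sub_mul_dvd_aeval_reverse {A B : Type*} [CommRing A] [CommRing B] [Algebra A B]
    (x y : B) {Q : A[X]} (hQ : aeval x Q = 0) : 1 - x * y ∣ aeval y Q.reverse := by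
  let π := Ideal.Quotient.mkₐ A (Ideal.span {1 - x * y})
  have hxy : π x * π y = 1 := by
    rw [← map_mul, ← map_one π, eq_comm]
    exact Ideal.Quotient.eq.2 (Ideal.mem_span_singleton_self _)
  let _ : Invertible (π x) := ⟨π y, (mul_comm _ _).trans hxy, hxy⟩
  have hrev := eval₂_reverse_mul_pow (algebraMap A _) (π x) Q
  rw [← aeval_def, ← aeval_def, aeval_algHom_apply, hQ, map_zero,
    ((isUnit_of_invertible (π x)).pow _).mul_left_eq_zero] at hrev
  rw [← Ideal.mem_span_singleton, ← Ideal.Quotient.eq_zero_iff_mem]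
  exact (aeval_algHom_apply π y Q.reverse).symm.trans hrev

open scoped IsMulCommutative in
theorem exists_aeval_reverse_eq_one_sub_mul {A B : Type*} [CommRing A] [Ring B] [Algebra A B]
    {x y : B} (hxy : Commute x y) {Q : A[X]} (hQ : aeval x Q = 0) :
    ∃ u, Commute (1 - x * y) u ∧ aeval y Q.reverse = (1 - x * y) * u := by
  let S := Algebra.adjoin A {x, y}
  have : IsMulCommutative (Algebra.adjoin A {x, y}) := Algebra.isMulCommutative_adjoin A (by
    rintro _ (rfl | rfl) _ (rfl | rfl)
    exacts [rfl, hxy, hxy.symm, rfl])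
  let x' : S := ⟨x, Algebra.subset_adjoin (by simp)⟩
  let y' : S := ⟨y, Algebra.subset_adjoin (by simp)⟩
  have hQ' : aeval x' Q = 0 := Subtype.ext ((aeval_algHom_apply S.val x' Q).symm.trans hQ)
  obtain ⟨u, hu⟩ := one_sub_mul_dvd_aeval_reverse x' y' hQ'
  refine ⟨u, congrArg S.val (mul_comm (1 - x' * y') u), ?_⟩
  exact (aeval_algHom_apply S.val y' Q.reverse).trans (congrArg S.val hu)

theorem exists_eq_C_mul_map_isPrimitive {R K : Type*} [CommRing R] [IsDomain R] [IsGCDMonoid R]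
    [Field K] [Algebra R K] [IsFractionRing R K] {Q : K[X]} (hQ : Q ≠ 0) :
    ∃ (c : K) (P : R[X]), c ≠ 0 ∧ P.IsPrimitive ∧ Q = C c * P.map (algebraMap R K) := by
  let _ : NormalizedGCDMonoid R := Nonempty.some inferInstance
  obtain ⟨b, hb, hN⟩ := IsLocalization.integerNormalization_spec (nonZeroDivisors R) Q
  set N := IsLocalization.integerNormalization (nonZeroDivisors R) Q
  have hb' : algebraMap R K b ≠ 0 := IsFractionRing.to_map_ne_zero_of_mem_nonZeroDivisors hb
  have hN0 : N.content ≠ 0 := by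
    rwa [Ne, content_eq_zero_iff, IsFractionRing.integerNormalization_eq_zero_iff]
  refine ⟨(algebraMap R K b)⁻¹ * algebraMap R K N.content, N.primPart,
    mul_ne_zero (inv_ne_zero hb') (by simpa using hN0), N.isPrimitive_primPart, ?_⟩
  rw [C_mul, mul_assoc, ← map_C, ← Polynomial.map_mul, ← N.eq_C_content_mul_primPart, hN,
    ← algebraMap_smul K b Q, smul_eq_C_mul, ← mul_assoc, ← C_mul, inv_mul_cancel₀ hb', C_1, one_mul]

theorem map_ne_zero_of_isPrimitive {R k : Type*} [CommRing R] [CommRing k] [Nontrivial k]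
    {σ : R →+* k} {ϖ : R} (hσ : RingHom.ker σ = Ideal.span {ϖ}) {P : R[X]} (hP : P.IsPrimitive) :
    P.map σ ≠ 0 := by
  intro h0
  have hdvd : C ϖ ∣ P := C_dvd_iff_dvd_coeff ϖ P |>.2 fun i => by
    rw [← Ideal.mem_span_singleton, ← hσ, RingHom.mem_ker, ← coeff_map, h0, coeff_zero]
  have hϖ : σ ϖ = 0 := by
    rw [← RingHom.mem_ker, hσ]; exact Ideal.mem_span_singleton_self ϖ
  exact ((hP ϖ hdvd).map σ).ne_zero hϖ

section TensorProduct

variable {R K V W : Type*} [CommRing R] [CommRing K] [Algebra R K]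
  [AddCommGroup V] [Module R V] [Module K V] [IsScalarTower R K V] [AddCommGroup W] [Module R W]

theorem aeval_lTensor_map (F : Module.End R W) (P : R[X]) :
    aeval (AlgebraTensorModule.lTensor K V F : Module.End K (V ⊗[R] W)) (P.map (algebraMap R K)) =
      AlgebraTensorModule.lTensor K V (aeval F P) := by
  rw [aeval_map_algebraMap]
  exact aeval_algHom_apply ((Module.endTensorEndAlgHom (S := R) (A := K) (M := V)).comp
    (Algebra.TensorProduct.includeRight : Module.End R W →ₐ[R] Module.End K V ⊗[R] Module.End R W))
    F P

theorem aeval_rTensor (φ : Module.End K V) (Q : K[X]) :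
    aeval (AlgebraTensorModule.rTensor R W φ : Module.End K (V ⊗[R] W)) Q =
      AlgebraTensorModule.rTensor R W (aeval φ Q) :=
  aeval_algHom_apply ((Module.endTensorEndAlgHom (R := R) (S := K) (A := K) (N := W)).comp
    (Algebra.TensorProduct.includeLeft : Module.End K V →ₐ[K] Module.End K V ⊗[R] Module.End R W))
    φ Q

theorem exists_smul_lTensor_aeval_eq [Module.Free K V] [Module.Finite K V]
    (φ : Module.End K V) (F : Module.End R W) {c : K} {P : R[X]}
    (hP : φ.charpoly.reverse = C c * P.map (algebraMap R K)) :
    ∃ u : Module.End K (V ⊗[R] W), Commute (1 - AlgebraTensorModule.map φ F) u ∧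
      c • AlgebraTensorModule.lTensor K V (aeval F P) = (1 - AlgebraTensorModule.map φ F) * u := by
  let x : Module.End K (V ⊗[R] W) := AlgebraTensorModule.rTensor R W φ
  let y : Module.End K (V ⊗[R] W) := AlgebraTensorModule.lTensor K V F
  have hmul : x * y = AlgebraTensorModule.map φ F := by ext v w; rfl
  have hcomm : Commute x y := by ext v w; rfl
  have hx : aeval x φ.charpoly = 0 := by
    rw [aeval_rTensor, φ.aeval_self_charpoly, map_zero]
  obtain ⟨u, hu, hyu⟩ := exists_aeval_reverse_eq_one_sub_mul hcomm hx
  rw [hP, map_mul, aeval_C, ← Algebra.smul_def, aeval_lTensor_map] at hyu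
  exact ⟨u, hmul ▸ hu, hmul ▸ hyu⟩

end TensorProduct

section FiniteDimensional

variable {R K V W : Type*} [CommRing R] [Field K] [Algebra R K]
  [AddCommGroup V] [Module R V] [Module K V] [IsScalarTower R K V] [FiniteDimensional K V]
  [AddCommGroup W] [Module R W]

theorem surjective_one_sub_map (φ : Module.End K V) (F : Module.End R W) {c : K} (hc : c ≠ 0)
    {P : R[X]} (hP : φ.charpoly.reverse = C c * P.map (algebraMap R K))
    (hF : Function.Surjective (aeval F P)) :
    Function.Surjective (1 - AlgebraTensorModule.map φ F : Module.End K (V ⊗[R] W)) := by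
  obtain ⟨u, -, hu⟩ := exists_smul_lTensor_aeval_eq φ F hP
  intro z
  obtain ⟨t, ht⟩ := LinearMap.lTensor_surjective V hF (c⁻¹ • z)
  refine ⟨u t, ?_⟩
  calc _ = c • AlgebraTensorModule.lTensor K V (aeval F P) t := (LinearMap.congr_fun hu t).symm
    _ = c • c⁻¹ • z := congrArg (c • ·) ht
    _ = z := smul_inv_smul₀ hc z

theorem finiteDimensional_ker_one_sub_map [Module.Flat R K] (φ : Module.End K V)
    (F : Module.End R W) {c : K} (hc : c ≠ 0) {P : R[X]}
    (hP : φ.charpoly.reverse = C c * P.map (algebraMap R K))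
    (hF : Module.Finite R (LinearMap.ker (aeval F P))) :
    FiniteDimensional K
      (LinearMap.ker (1 - AlgebraTensorModule.map φ F : Module.End K (V ⊗[R] W))) := by
  obtain ⟨u, hcomm, hu⟩ := exists_smul_lTensor_aeval_eq φ F hP
  have hle : LinearMap.ker (1 - AlgebraTensorModule.map φ F : Module.End K (V ⊗[R] W)) ≤
      LinearMap.ker (AlgebraTensorModule.lTensor K V (aeval F P)) := by
    rw [← LinearMap.ker_smul (AlgebraTensorModule.lTensor K V (aeval F P)) c hc, hu, hcomm.eq]
    exact LinearMap.ker_le_ker_comp _ u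
  have : Module.Flat R V := Module.Flat.trans R K V
  rw [Module.Flat.ker_lTensor_eq] at hle
  have : Module.Finite K (V ⊗[R] LinearMap.ker (aeval F P)) :=
    Module.Finite.equiv (AlgebraTensorModule.cancelBaseChange R K K V _)
  exact Submodule.finiteDimensional_of_le hle

end FiniteDimensional

section Adic

variable {R : Type*} [CommRing R] {I : Ideal R}

theorem isPrecomplete_of_finite [IsPrecomplete I R] (M : Type*) [AddCommGroup M]
    [Module R M] [Module.Finite R M] : IsPrecomplete I M := by
  refine AdicCompletion.of_surjective_iff.1 fun y => ?_
  obtain ⟨t, rfl⟩ := AdicCompletion.ofTensorProduct_surjective_of_finite I M y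
  induction t with
  | zero => exact ⟨0, by simp⟩
  | tmul r m =>
    obtain ⟨r, rfl⟩ := AdicCompletion.of_surjective I R r
    refine ⟨r • m, ?_⟩
    rw [AdicCompletion.ofTensorProduct_tmul]
    ext n
    rfl
  | add s t hs ht =>
    obtain ⟨x, hx⟩ := hs
    obtain ⟨y, hy⟩ := ht
    exact ⟨x + y, by rw [map_add, map_add, hx, hy]⟩

theorem isHausdorff_submodule {M : Type*} [AddCommGroup M] [Module R M] [IsHausdorff I M]
    (N : Submodule R M) : IsHausdorff I N := by
  refine ⟨fun x hx => Subtype.ext (IsHausdorff.haus ‹IsHausdorff I M› x.1 fun n => ?_)⟩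
  rw [SModEq.zero]
  exact Submodule.smul_top_le_comap_smul_top (I ^ n) N.subtype (SModEq.zero.1 (hx n))

theorem eq_top_of_fg_of_sup_smul_top_eq_top [IsPrecomplete I R] {M : Type*} [AddCommGroup M]
    [Module R M] [IsHausdorff I M] {N : Submodule R M} (hN : N.FG) (h : N ⊔ I • ⊤ = ⊤) :
    N = ⊤ := by
  have : Module.Finite R N := Module.Finite.iff_fg.2 hN
  have : IsPrecomplete I N := isPrecomplete_of_finite N
  rw [← N.range_subtype, LinearMap.range_eq_top]
  refine surjective_of_mkQ_comp_surjective (I := I) (LinearMap.range_eq_top.1 ?_)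
  rw [LinearMap.range_comp, N.range_subtype, Submodule.map_mkQ_eq_top, sup_comm, h]

variable {k : Type*} [CommRing k] {σ : R →+* k}
  {M N : Type*} [AddCommGroup M] [Module R M] [AddCommGroup N] [Module k N]

theorem map_aeval_of_semiconj {π : M →ₛₗ[σ] N} {F : Module.End R M} {f : Module.End k N}
    (h : ∀ x, π (F x) = f (π x)) (P : R[X]) (x : M) :
    π (aeval F P x) = aeval f (P.map σ) (π x) := by
  induction P using Polynomial.induction_on' with
  | add P Q hP hQ => simp only [map_add, Polynomial.map_add, LinearMap.add_apply, hP, hQ]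
  | monomial n c =>
    have hpow : π ((F ^ n) x) = (f ^ n) (π x) := by
      simp only [Module.End.pow_apply]
      exact Function.Semiconj.iterate_right h n x
    simp [aeval_monomial, hpow]

theorem surjective_of_semiconj [IsAdicComplete I M] {π : M →ₛₗ[σ] N}
    (hπ : Function.Surjective π) (hker : LinearMap.ker π = I • ⊤) {G : Module.End R M}
    {g : Module.End k N} (h : ∀ x, π (G x) = g (π x)) (hg : Function.Surjective g) :
    Function.Surjective G := by
  refine surjective_of_mkQ_comp_surjective (I := I) fun y => ?_
  obtain ⟨y, rfl⟩ := Submodule.mkQ_surjective _ y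
  obtain ⟨x, hx⟩ := (hg.comp hπ) (π y)
  refine ⟨x, (Submodule.Quotient.eq _).2 ?_⟩
  rw [← hker, LinearMap.sub_mem_ker_iff, h]
  exact hx

variable [RingHomSurjective σ]

theorem finite_of_ker_le_smul_top [IsPrecomplete I R] [IsHausdorff I M]
    (π : M →ₛₗ[σ] N) (hker : LinearMap.ker π ≤ I • ⊤) (hfg : (LinearMap.range π).FG) :
    Module.Finite R M := by
  obtain ⟨n, s, hs⟩ := Submodule.fg_iff_exists_fin_generating_family.1 hfg
  choose t ht using fun i => (hs ▸ Submodule.subset_span ⟨i, rfl⟩ : s i ∈ LinearMap.range π)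
  let T := Submodule.span R (Set.range t)
  have hT : T.map π = LinearMap.range π := by
    rw [Submodule.map_span, ← Set.range_comp, ← hs]
    exact congrArg (fun f => Submodule.span k (Set.range f)) (funext ht)
  have htop : T ⊔ I • ⊤ = ⊤ := by
    refine top_le_iff.1 (le_trans ?_ (sup_le_sup_left hker T))
    rw [← Submodule.comap_map_eq, hT]
    exact fun x _ => ⟨x, rfl⟩
  have hT' := eq_top_of_fg_of_sup_smul_top_eq_top (Submodule.fg_span (Set.finite_range t)) htop
  exact ⟨hT' ▸ Submodule.fg_span (Set.finite_range t)⟩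

theorem finite_ker_of_semiconj {ϖ : R} [IsPrecomplete (Ideal.span {ϖ}) R]
    [IsHausdorff (Ideal.span {ϖ}) M] (hϖ : IsSMulRegular M ϖ) {π : M →ₛₗ[σ] N}
    (hker : LinearMap.ker π = Ideal.span {ϖ} • ⊤) {G : Module.End R M}
    {g : Module.End k N} (h : ∀ x, π (G x) = g (π x))
    [IsNoetherian k (LinearMap.ker g)] :
    Module.Finite R (LinearMap.ker G) := by
  have := isHausdorff_submodule (I := Ideal.span {ϖ}) (LinearMap.ker G)
  refine finite_of_ker_le_smul_top (I := Ideal.span {ϖ}) (π.comp (LinearMap.ker G).subtype) ?_ ?_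
  · rintro ⟨x, hx⟩ hπx
    obtain ⟨y, -, rfl⟩ : x ∈ ϖ • (⊤ : Submodule R M) := by
      rw [← Submodule.ideal_span_singleton_smul, ← hker]
      exact hπx
    have hy : G y = 0 := hϖ (by simpa using hx)
    rw [Submodule.ideal_span_singleton_smul]
    exact ⟨⟨y, hy⟩, trivial, rfl⟩
  · refine isNoetherian_submodule.1 (‹_› : IsNoetherian k (LinearMap.ker g)) _ ?_
    rintro _ ⟨⟨x, hx⟩, rfl⟩
    simpa [h] using congrArg π hx

end Adic

section GeneralizedEigenspace

theorem mem_maxGenEigenspace_of_sub_smul_mem {R M : Type*} [CommRing R] [AddCommGroup M]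
    [Module R M] {f : Module.End R M} {μ : R} {x : M}
    (hx : (f - μ • 1 : Module.End R M) x ∈ f.maxGenEigenspace μ) : x ∈ f.maxGenEigenspace μ := by
  obtain ⟨n, hn⟩ := (f.mem_maxGenEigenspace μ _).1 hx
  exact (f.mem_maxGenEigenspace μ x).2 ⟨n + 1, by rw [pow_succ, Module.End.mul_apply, hn]⟩

variable {k V : Type*} [Field k] [AddCommGroup V] [Module k V]

theorem aeval_surjective_of_maxGenEigenspace_eq_top {f : Module.End k V} {μ : k}
    (htop : f.maxGenEigenspace μ = ⊤) (hsurj : Function.Surjective (f - μ • 1 : Module.End k V))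
    {Q : k[X]} (hQ : Q ≠ 0) : Function.Surjective (aeval f Q) := by
  obtain ⟨R, hQR, hR⟩ := exists_eq_pow_rootMultiplicity_mul_and_not_dvd Q hQ μ
  have haeval : aeval f (X - C μ) = f - μ • 1 := by
    rw [map_sub, aeval_X, aeval_C, Module.algebraMap_end_eq_smul_id]; rfl
  have hRsurj : Function.Surjective (aeval f R) := by
    intro y
    obtain ⟨n, hn⟩ := (f.mem_maxGenEigenspace μ y).1 (htop ▸ Submodule.mem_top)
    have hcop : IsCoprime R ((X - C μ) ^ n) :=
      ((irreducible_X_sub_C μ).coprime_iff_not_dvd.2 hR).symm.pow_right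
    obtain ⟨u, v, huv⟩ := hcop
    refine ⟨aeval f u y, ?_⟩
    calc aeval f R (aeval f u y) = aeval f (u * R + v * (X - C μ) ^ n) y := by
          simp [haeval, hn, mul_comm u R]
      _ = y := by rw [huv, map_one, Module.End.one_apply]
  rw [hQR, map_mul, map_pow, haeval, Module.End.mul_eq_comp, LinearMap.coe_comp, Module.End.coe_pow]
  exact (hsurj.iterate _).comp hRsurj

theorem aeval_surjective_of_range_eq_maxGenEigenspace {U : Type*} [AddCommGroup U] [Module k U]
    {f : Module.End k V} {g : Module.End k U} {μ : k} {ι : U →ₗ[k] V}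
    (hι : Function.Injective ι) (h : ∀ x, ι (g x) = f (ι x))
    (hrange : LinearMap.range ι = f.maxGenEigenspace μ)
    (hsurj : Function.Surjective (f - μ • 1 : Module.End k V)) {Q : k[X]} (hQ : Q ≠ 0) :
    Function.Surjective (aeval g Q) := by
  have hsub : Function.Semiconj ι (g - μ • 1 : Module.End k U) (f - μ • 1 : Module.End k V) :=
    fun x => by simp [h]
  refine aeval_surjective_of_maxGenEigenspace_eq_top (μ := μ) (eq_top_iff.2 fun x _ => ?_)
    (fun y => ?_) hQ
  · obtain ⟨n, hn⟩ := (f.mem_maxGenEigenspace μ _).1 (hrange ▸ LinearMap.mem_range_self ι x)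
    refine (g.mem_maxGenEigenspace μ x).2 ⟨n, hι ?_⟩
    rw [Module.End.pow_apply, hsub.iterate_right n x, ← Module.End.pow_apply, hn, map_zero]
  · obtain ⟨x, hx⟩ := hsurj (ι y)
    have hxmem : x ∈ LinearMap.range ι := by
      rw [hrange]
      apply mem_maxGenEigenspace_of_sub_smul_mem
      rw [hx, ← hrange]
      exact LinearMap.mem_range_self ι y
    obtain ⟨x, rfl⟩ := hxmem
    exact ⟨x, hι ((hsub x).trans hx)⟩

end GeneralizedEigenspace

/-- The linearized polynomial `∑ cᵢ X ^ (q ^ i)` attached to `Q = ∑ cᵢ X ^ i`. Over a finite field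
with `q` elements, its roots are the elements killed by `Q` evaluated at the `q`-power Frobenius. -/
noncomputable def linearized {R : Type*} [Semiring R] (q : ℕ) (Q : R[X]) : R[X] :=
  Q.sum fun i c => monomial (q ^ i) c

theorem coeff_linearized_pow {R : Type*} [Semiring R] {q : ℕ} (hq : 1 < q) (Q : R[X]) (i : ℕ) :
    (linearized q Q).coeff (q ^ i) = Q.coeff i := by
  simp [linearized, sum_def, coeff_monomial, (Nat.pow_right_injective hq).eq_iff, eq_comm]

theorem linearized_ne_zero {R : Type*} [Semiring R] {q : ℕ} (hq : 1 < q) {Q : R[X]} (hQ : Q ≠ 0) :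
    linearized q Q ≠ 0 := fun h =>
  hQ <| Polynomial.ext fun i => by rw [← coeff_linearized_pow hq, h, coeff_zero, coeff_zero]

section FiniteField

variable {k L : Type*} [Field k] [Fintype k] [Field L] [Algebra k L]

theorem frobeniusAlgHom_toLinearMap_pow_apply (i : ℕ) (x : L) :
    ((FiniteField.frobeniusAlgHom k L).toLinearMap ^ i) x = x ^ Fintype.card k ^ i := by
  rw [Module.End.pow_apply]
  exact congrFun (pow_iterate (Fintype.card k) i) x

theorem aeval_linearized_card (Q : k[X]) (x : L) :
    aeval x (linearized (Fintype.card k) Q) =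
      aeval (FiniteField.frobeniusAlgHom k L).toLinearMap Q x := by
  rw [linearized, sum_def, map_sum, aeval_def (p := Q), eval₂_eq_sum, sum_def, LinearMap.sum_apply]
  refine Finset.sum_congr rfl fun i _ => ?_
  rw [aeval_monomial, Module.End.mul_apply, frobeniusAlgHom_toLinearMap_pow_apply,
    Module.algebraMap_end_apply, Algebra.smul_def]

theorem finite_ker_aeval_frobeniusAlgHom {Q : k[X]} (hQ : Q ≠ 0) :
    Finite (LinearMap.ker (aeval (FiniteField.frobeniusAlgHom k L).toLinearMap Q)) := by
  refine (rootSet_finite (linearized (Fintype.card k) Q) L).subset fun x hx => ?_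
  rw [mem_rootSet, aeval_linearized_card]
  exact ⟨linearized_ne_zero Fintype.one_lt_card hQ, hx⟩

end FiniteField

section Frobenius

variable (p : ℕ) [Fact p.Prime] (a : ℕ) (K : Type*) [Field K] [Algebra (ZMod p) K]

/-- The `a`-th iterate `x ↦ x ^ p ^ a` of the Frobenius, as an `𝔽_p`-linear endomorphism. -/
noncomputable def frobeniusEnd : Module.End (ZMod p) K :=
  (FiniteField.frobeniusAlgHom (ZMod p) K).toLinearMap ^ a

variable {p a K}

theorem frobeniusEnd_apply (x : K) : frobeniusEnd p a K x = x ^ p ^ a := by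
  rw [frobeniusEnd, frobeniusAlgHom_toLinearMap_pow_apply, ZMod.card]

theorem frobeniusEnd_pow (n : ℕ) : frobeniusEnd p a K ^ n = frobeniusEnd p (a * n) K :=
  (pow_mul _ a n).symm

theorem frobeniusEnd_sub_one_pow (n : ℕ) :
    (frobeniusEnd p a K - 1) ^ p ^ n = frobeniusEnd p (a * p ^ n) K - 1 := by
  have : CharP (Module.End (ZMod p) K) p := charP_of_injective_algebraMap' (ZMod p) p
  rw [sub_pow_char_pow_of_commute _ _ (Commute.one_right _), one_pow, frobeniusEnd_pow]

theorem finite_ker_aeval_frobeniusEnd (ha : a ≠ 0) {Q : (ZMod p)[X]} (hQ : Q ≠ 0) :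
    Finite (LinearMap.ker (aeval (frobeniusEnd p a K) Q)) := by
  rw [frobeniusEnd, ← expand_aeval]
  exact finite_ker_aeval_frobeniusAlgHom ((expand_ne_zero (Nat.pos_of_ne_zero ha)).2 hQ)

theorem frobeniusEnd_sub_one_surjective [IsAlgClosed K] (ha : a ≠ 0) :
    Function.Surjective (frobeniusEnd p a K - 1 : Module.End (ZMod p) K) := by
  intro y
  have hq : 1 < p ^ a := Nat.one_lt_pow ha (Fact.out : p.Prime).one_lt
  have hdeg : (X ^ p ^ a - (X + C y)).degree ≠ 0 := by
    rw [degree_sub_eq_left_of_degree_lt, degree_X_pow]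
    · exact_mod_cast (Nat.zero_lt_of_lt hq).ne'
    · rw [degree_X_pow, degree_X_add_C]
      exact_mod_cast hq
  obtain ⟨x, hx⟩ := IsAlgClosed.exists_root _ hdeg
  refine ⟨x, ?_⟩
  rw [LinearMap.sub_apply, frobeniusEnd_apply, Module.End.one_apply, sub_eq_iff_eq_add']
  simpa [sub_eq_zero] using hx

end Frobenius

section ConstantExtension

variable {p : ℕ} [Fact p.Prime] {a : ℕ}

theorem mem_kLevel_iff {n : ℕ} {x : AlgebraicClosure (ZMod p)} :
    x ∈ kLevel p a n ↔ ((frobeniusEnd p a (AlgebraicClosure (ZMod p)) - 1) ^ p ^ n) x = 0 := by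
  rw [frobeniusEnd_sub_one_pow, LinearMap.sub_apply, frobeniusEnd_apply, sub_eq_zero]
  rfl

theorem kLevel_mono : Monotone (kLevel p a) := fun _ _ hmn _ hx =>
  mem_kLevel_iff.2 <| Module.End.pow_map_zero_of_le
    (Nat.pow_le_pow_right (Fact.out : p.Prime).pos hmn) (mem_kLevel_iff.1 hx)

theorem mem_kInf_iff {x : AlgebraicClosure (ZMod p)} :
    x ∈ kInf p a ↔
      x ∈ (frobeniusEnd p a (AlgebraicClosure (ZMod p))).maxGenEigenspace 1 := by
  rw [kInf, Subfield.mem_iSup_of_directed kLevel_mono.directed_le, Module.End.mem_maxGenEigenspace,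
    one_smul]
  simp only [mem_kLevel_iff]
  exact ⟨fun ⟨n, hn⟩ => ⟨_, hn⟩, fun ⟨n, hn⟩ => ⟨n, Module.End.pow_map_zero_of_le
    (Nat.lt_pow_self (Fact.out : p.Prime).one_lt).le hn⟩⟩

theorem aeval_frobeniusEnd_surjective_of_fieldRange_eq_kInf {K : Type*} [Field K]
    [Algebra (ZMod p) K] {ι : K →+* AlgebraicClosure (ZMod p)} (hι : ι.fieldRange = kInf p a)
    (ha : a ≠ 0) {Q : (ZMod p)[X]} (hQ : Q ≠ 0) :
    Function.Surjective (aeval (frobeniusEnd p a K) Q) := by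
  let ι' := ι.toAddMonoidHom.toZModLinearMap p
  have hcomm (x : K) : ι' (frobeniusEnd p a K x) =
      frobeniusEnd p a (AlgebraicClosure (ZMod p)) (ι' x) := by
    rw [frobeniusEnd_apply, frobeniusEnd_apply]
    exact map_pow ι x (p ^ a)
  have hrange : LinearMap.range ι' =
      (frobeniusEnd p a (AlgebraicClosure (ZMod p))).maxGenEigenspace 1 := by
    ext x
    rw [← mem_kInf_iff, ← hι]
    rfl
  refine aeval_surjective_of_range_eq_maxGenEigenspace ι.injective hcomm hrange ?_ hQ
  rw [one_smul]
  exact frobeniusEnd_sub_one_surjective ha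

theorem perfectRing_kInf : PerfectRing (kInf p a) p := by
  let _ : Algebra (ZMod p) (kInf p a) := ZMod.algebra _ p
  have : Algebra.IsAlgebraic (ZMod p) (kInf p a) :=
    .of_ringHom_of_comp_eq (RingHom.id (ZMod p)) (kInf p a).subtype Function.surjective_id
      (kInf p a).subtype.injective (RingHom.ext_zmod _ _)
  have : PerfectField (kInf p a) := Algebra.IsAlgebraic.perfectField (ZMod p)
  exact PerfectField.toPerfectRing p

end ConstantExtension

theorem ringHom_apply_eq_zmodRepr {p : ℕ} [Fact p.Prime] {R : Type*} [Ring R] [CharP R p]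
    (g : ℤ_[p] →+* R) (c : ℤ_[p]) : g c = c.zmodRepr := by
  have hc := PadicInt.sub_zmodRepr_mem c
  rw [PadicInt.maximalIdeal_eq_span_p, Ideal.mem_span_singleton] at hc
  have hdvd := map_dvd g hc
  rwa [map_sub, map_natCast, map_natCast, CharP.cast_eq_zero, zero_dvd_iff, sub_eq_zero] at hdvd

section WittVector

variable (p : ℕ) [Fact p.Prime] (K : Type*) [Field K] [CharP K p]

/-- The `ℤ_p`-module structure on `W(K)` given by `wittScalar`. -/
@[reducible]
noncomputable def wittModule : Module ℤ_[p] (WittVector p K) := (wittScalar p K).toModule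

attribute [local instance] wittModule

variable {p K}

theorem wittModule_smul_def (c : ℤ_[p]) (x : WittVector p K) : c • x = wittScalar p K c * x := rfl

theorem frobenius_wittScalar (c : ℤ_[p]) :
    WittVector.frobenius (wittScalar p K c) = wittScalar p K c := by
  ext n
  rw [WittVector.coeff_frobenius_charP, wittScalar, RingHom.comp_apply, WittVector.map_coeff,
    ← map_pow, ZMod.pow_card]

variable (p K) in
/-- The Witt vector Frobenius as a `ℤ_p`-linear endomorphism of `W(K)`. -/
noncomputable def wittFrobenius : Module.End ℤ_[p] (WittVector p K) where
  toFun := WittVector.frobenius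
  map_add' := map_add _
  map_smul' c x := by
    rw [wittModule_smul_def, map_mul, frobenius_wittScalar, RingHom.id_apply, wittModule_smul_def]

theorem isSMulRegular_wittVector_prime : IsSMulRegular (WittVector p K) (p : ℤ_[p]) := by
  refine .of_right_eq_zero_of_smul fun x hx => ?_
  rw [wittModule_smul_def, map_natCast] at hx
  exact (mul_eq_zero.1 hx).resolve_left (WittVector.p_nonzero p K)

theorem map_wittScalar_span_prime :
    (Ideal.span {(p : ℤ_[p])}).map (wittScalar p K) = Ideal.span {(p : WittVector p K)} := by
  rw [Ideal.map_span, Set.image_singleton, map_natCast]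

theorem isAdicComplete_wittVector [PerfectRing K p] :
    IsAdicComplete (Ideal.span {(p : ℤ_[p])}) (WittVector p K) := by
  let _ : Algebra ℤ_[p] (WittVector p K) := (wittScalar p K).toAlgebra
  have h : IsAdicComplete ((Ideal.span {(p : ℤ_[p])}).map (algebraMap ℤ_[p] (WittVector p K)))
      (WittVector p K) := by
    rw [RingHom.algebraMap_toAlgebra, map_wittScalar_span_prime]
    infer_instance
  exact
    { toIsHausdorff := IsHausdorff.map_algebraMap_iff.1 h.toIsHausdorff
      toIsPrecomplete := IsPrecomplete.map_algebraMap_iff.1 h.toIsPrecomplete }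

variable [Algebra (ZMod p) K]

theorem constantCoeff_wittScalar (c : ℤ_[p]) :
    WittVector.constantCoeff (wittScalar p K c) = algebraMap (ZMod p) K (PadicInt.toZMod c) :=
  (ringHom_apply_eq_zmodRepr (WittVector.constantCoeff.comp (wittScalar p K)) c).trans
    (ringHom_apply_eq_zmodRepr ((algebraMap (ZMod p) K).comp PadicInt.toZMod) c).symm

variable (p K) in
/-- Reduction modulo `p`, `W(K) → K`, as a map semilinear over `ℤ_p → 𝔽_p`. -/
noncomputable def wittResidue : WittVector p K →ₛₗ[PadicInt.toZMod (p := p)] K where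
  toFun := WittVector.constantCoeff
  map_add' := map_add _
  map_smul' c x := by
    rw [wittModule_smul_def, map_mul, constantCoeff_wittScalar, Algebra.smul_def]

theorem wittResidue_surjective : Function.Surjective (wittResidue p K) :=
  WittVector.constantCoeff_surjective p

theorem ker_wittResidue [PerfectRing K p] :
    LinearMap.ker (wittResidue p K) = Ideal.span {(p : ℤ_[p])} • ⊤ := by
  ext x
  rw [Submodule.ideal_span_singleton_smul, Submodule.mem_smul_pointwise_iff_exists]
  refine (WittVector.mem_span_p_iff_coeff_zero_eq_zero x).symm.trans ?_
  rw [Ideal.mem_span_singleton]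
  simp only [Submodule.mem_top, true_and, wittModule_smul_def, map_natCast, Dvd.dvd, eq_comm]

theorem wittResidue_wittFrobenius_pow (a : ℕ) (x : WittVector p K) :
    wittResidue p K ((wittFrobenius p K ^ a) x) = frobeniusEnd p a K (wittResidue p K x) := by
  have h : Function.Semiconj (wittResidue p K) (wittFrobenius p K) (frobeniusEnd p 1 K) :=
    fun x => by
      rw [frobeniusEnd_apply, pow_one]
      exact WittVector.coeff_frobenius_charP p x 0
  rw [frobeniusEnd, Module.End.pow_apply, Module.End.pow_apply]
  rw [frobeniusEnd, pow_one] at h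
  exact h.iterate_right a x

variable [PerfectRing K p] {a : ℕ} {P : ℤ_[p][X]}

theorem aeval_wittFrobenius_pow_surjective
    (h : Function.Surjective (aeval (frobeniusEnd p a K) (P.map PadicInt.toZMod))) :
    Function.Surjective (aeval (wittFrobenius p K ^ a) P) :=
  have := isAdicComplete_wittVector (p := p) (K := K)
  surjective_of_semiconj wittResidue_surjective ker_wittResidue
    (map_aeval_of_semiconj (wittResidue_wittFrobenius_pow a) P) h

theorem finite_ker_aeval_wittFrobenius_pow (ha : a ≠ 0) (hP : P.map PadicInt.toZMod ≠ 0) :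
    Module.Finite ℤ_[p] (LinearMap.ker (aeval (wittFrobenius p K ^ a) P)) := by
  have := isAdicComplete_wittVector (p := p) (K := K)
  have : IsAdicComplete (Ideal.span {(p : ℤ_[p])}) ℤ_[p] := by
    rw [← PadicInt.maximalIdeal_eq_span_p]
    infer_instance
  have : RingHomSurjective (PadicInt.toZMod (p := p)) := ⟨ZMod.ringHom_surjective _⟩
  have := finite_ker_aeval_frobeniusEnd (K := K) ha hP
  exact finite_ker_of_semiconj isSMulRegular_wittVector_prime ker_wittResidue
    (map_aeval_of_semiconj (wittResidue_wittFrobenius_pow a) P)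

theorem stmt_15_general
    (hK : ∀ Q : (ZMod p)[X], Q ≠ 0 → Function.Surjective (aeval (frobeniusEnd p a K) Q))
    {V : Type*} [AddCommGroup V] [Module ℚ_[p] V] [FiniteDimensional ℚ_[p] V]
    [Module ℤ_[p] V] [IsScalarTower ℤ_[p] ℚ_[p] V] (φ : Module.End ℚ_[p] V) :
    Function.Surjective (1 - AlgebraTensorModule.map φ (wittFrobenius p K ^ a) :
        Module.End ℚ_[p] (V ⊗[ℤ_[p]] WittVector p K)) ∧
      FiniteDimensional ℚ_[p]
        (LinearMap.ker (1 - AlgebraTensorModule.map φ (wittFrobenius p K ^ a) :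
          Module.End ℚ_[p] (V ⊗[ℤ_[p]] WittVector p K))) := by
  have ha : a ≠ 0 := by
    rintro rfl
    obtain ⟨x, hx⟩ := hK (X - 1) (X_sub_C_ne_zero 1) 1
    simp [frobeniusEnd] at hx
  obtain ⟨c, P, hc, hP, hcP⟩ := exists_eq_C_mul_map_isPrimitive (R := ℤ_[p])
    (mt reverse_eq_zero.1 φ.charpoly_monic.ne_zero)
  have hP0 : P.map PadicInt.toZMod ≠ 0 :=
    map_ne_zero_of_isPrimitive (PadicInt.ker_toZMod.trans PadicInt.maximalIdeal_eq_span_p) hP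
  have : Module.Flat ℤ_[p] ℚ_[p] := IsLocalization.flat ℚ_[p] (nonZeroDivisors ℤ_[p])
  exact ⟨surjective_one_sub_map φ _ hc hcP (aeval_wittFrobenius_pow_surjective (hK _ hP0)),
    finiteDimensional_ker_one_sub_map φ _ hc hcP (finite_ker_aeval_wittFrobenius_pow ha hP0)⟩

end WittVector

/-- Let `q = p^a`, `k_∞ = ∪ k_n ⊆ 𝔽̄_p` the union of the subfields with `q^{p^n}` elements,
`W(k_∞)` its ring of Witt vectors, `F` the `a`-th iterate of the Witt vector Frobenius
(which is `ℤ_p`-linear), and `φ` a `ℚ_p`-linear endomorphism of a finite-dimensional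
`ℚ_p`-vector space `V`. Then the `ℚ_p`-linear endomorphism `1 - φ⊗F` of
`V ⊗_{ℤ_p} W(k_∞)` is surjective with finite-dimensional kernel over `ℚ_p`. -/
theorem stmt_15 (p : ℕ) [Fact p.Prime] (a : ℕ) (ha : 1 ≤ a)
    (V : Type*) [AddCommGroup V] [Module ℚ_[p] V] [FiniteDimensional ℚ_[p] V]
    (φ : V →ₗ[ℚ_[p]] V) :
    letI : Module ℤ_[p] V := Module.compHom V (algebraMap ℤ_[p] ℚ_[p])
    letI : IsScalarTower ℤ_[p] ℚ_[p] V :=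
      ⟨fun c q v => by
        show ((c • q) : ℚ_[p]) • v = (algebraMap ℤ_[p] ℚ_[p] c) • (q • v)
        rw [Algebra.smul_def, mul_smul]⟩
    letI : SMulCommClass ℤ_[p] ℚ_[p] V :=
      ⟨fun c q v => smul_comm (algebraMap ℤ_[p] ℚ_[p] c) q v⟩
    letI : Module ℤ_[p] (WittVector p (kInf p a)) := (wittScalar p (kInf p a)).toModule
    ∃ F : WittVector p (kInf p a) →ₗ[ℤ_[p]] WittVector p (kInf p a),
      (∀ x : WittVector p (kInf p a), F x = (⇑(WittVector.frobenius (p := p)))^[a] x) ∧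
      Function.Surjective
        ⇑(LinearMap.id - TensorProduct.AlgebraTensorModule.map φ F :
          TensorProduct ℤ_[p] V (WittVector p (kInf p a)) →ₗ[ℚ_[p]]
            TensorProduct ℤ_[p] V (WittVector p (kInf p a))) ∧
      FiniteDimensional ℚ_[p]
        (LinearMap.ker (LinearMap.id - TensorProduct.AlgebraTensorModule.map φ F :
          TensorProduct ℤ_[p] V (WittVector p (kInf p a)) →ₗ[ℚ_[p]]
            TensorProduct ℤ_[p] V (WittVector p (kInf p a)))) := by
  let _ : Module ℤ_[p] V := Module.compHom V (algebraMap ℤ_[p] ℚ_[p])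
  have : IsScalarTower ℤ_[p] ℚ_[p] V :=
    ⟨fun c q v => by rw [Algebra.smul_def, mul_smul]; rfl⟩
  let _ := wittModule p (kInf p a)
  let _ : Algebra (ZMod p) (kInf p a) := ZMod.algebra _ p
  have : PerfectRing (kInf p a) p := perfectRing_kInf
  refine ⟨wittFrobenius p (kInf p a) ^ a, Module.End.pow_apply _ a, ?_⟩
  exact stmt_15_general (fun Q hQ => aeval_frobeniusEnd_surjective_of_fieldRange_eq_kInf
    (kInf p a).fieldRange_subtype (Nat.one_le_iff_ne_zero.1 ha) hQ) φ
end
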